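/- Let n₁ and n₂ be positive integers and let K₁ ⊂ ℝ^{n₁} and K₂ ⊂ ℝ^{n₂} be convex bodies. Then the convex bodies K = K₁ × K₂ and K' = K₁ × (−K₂) in ℝ^{n₁} × ℝ^{n₂} have the same covariogram: g_K(z) = g_{K'}(z) for every z ∈ ℝ^{n₁} × ℝ^{n₂}. -/

import Mathlib

/-!
The intersection of a product with its translate is the product of the corresponding
intersections of the factors, so `g_{A × B}(x, y) = g_A(x) g_B(y)`. It remains to see that
`g_{-B} = g_B`: the reflection `t ↦ y - t` preserves Lebesgue measure and carries
`-B ∩ (-B + y)` onto `B ∩ (B + y)`.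
-/

open MeasureTheory Pointwise

/-- The covariogram `g_K(x) = λ(K ∩ (K + x))` of a set `K` in a measure space with
addition. -/
noncomputable def covariogram {E : Type*} [MeasureSpace E] [Add E] (K : Set E) (x : E) : ℝ :=
  (volume (K ∩ ((· + x) '' K))).toReal

theorem covariogram_prod {E F : Type*} [MeasureSpace E] [AddGroup E] [MeasureSpace F] [AddGroup F]
    [SFinite (volume : Measure F)] (A : Set E) (B : Set F) (z : E × F) :
    covariogram (A ×ˢ B) z = covariogram A z.1 * covariogram B z.2 := by
  have h : (A ×ˢ B) ∩ ((· + z) '' (A ×ˢ B)) =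
      (A ∩ ((· + z.1) '' A)) ×ˢ (B ∩ ((· + z.2) '' B)) := by
    ext ⟨a, b⟩
    simp only [Set.image_add_right, Set.mem_inter_iff, Set.mem_prod, Set.mem_preimage,
      Prod.fst_add, Prod.snd_add, Prod.fst_neg, Prod.snd_neg]
    tauto
  simp only [covariogram]
  rw [h, Measure.volume_eq_prod, Measure.prod_prod, ENNReal.toReal_mul]

/-- A set and its reflection have the same covariogram, because `t ↦ y - t` exchanges the two
intersections. -/
theorem covariogram_neg {E : Type*} [MeasureSpace E] [AddCommGroup E] [MeasurableAdd E]
    [MeasurableNeg E] [(volume : Measure E).IsAddLeftInvariant]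
    [(volume : Measure E).IsNegInvariant] (B : Set E) (y : E) :
    covariogram (-B) y = covariogram B y := by
  have h : (-B) ∩ ((· + y) '' (-B)) =
      (fun t => -t) ⁻¹' ((fun t => y + t) ⁻¹' (B ∩ ((· + y) '' B))) := by
    ext t
    have e : -(t + -y) = y + -t := by abel
    have e' : y + -t + -y = -t := by abel
    simp only [Set.image_add_right, Set.mem_inter_iff, Set.mem_preimage, Set.mem_neg, e, e']
    tauto
  simp only [covariogram]
  rw [h]
  change (volume (-((fun t => y + t) ⁻¹' (B ∩ ((· + y) '' B))))).toReal = _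
  rw [Measure.measure_neg, measure_preimage_add]

/-- The convex bodies `K₁ × K₂` and `K₁ × (−K₂)` have the same covariogram. -/
theorem covariogram_prod_neg (n₁ n₂ : ℕ) (hn₁ : 0 < n₁) (hn₂ : 0 < n₂)
    (K₁ : Set (EuclideanSpace ℝ (Fin n₁))) (K₂ : Set (EuclideanSpace ℝ (Fin n₂)))
    (hK₁c : IsCompact K₁) (hK₁conv : Convex ℝ K₁) (hK₁int : (interior K₁).Nonempty)
    (hK₂c : IsCompact K₂) (hK₂conv : Convex ℝ K₂) (hK₂int : (interior K₂).Nonempty) :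
    ∀ z : EuclideanSpace ℝ (Fin n₁) × EuclideanSpace ℝ (Fin n₂),
      covariogram (K₁ ×ˢ K₂) z = covariogram (K₁ ×ˢ (-K₂)) z := by
  intro z
  rw [covariogram_prod, covariogram_prod, covariogram_neg]
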